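/- (Exact characterization of the zero-conditional-loss set) A window family x̂ is real if and only if L_cond(x̂) = 0; that is, X_real = X_cond^0. -/

import Mathlib

open scoped BigOperators

/-- Self-guidance loss: squared errors at observed positions. -/
noncomputable def Lself {C w n : ℕ}
    (x : Fin n → Fin w → EuclideanSpace ℝ (Fin C))
    (m : Fin n → Fin w → Bool)
    (xh : Fin n → Fin w → EuclideanSpace ℝ (Fin C)) : ℝ :=
  ∑ j : Fin n, ∑ i : Fin w,
    if m j i = false then ‖xh j i - x j i‖ ^ 2 else 0

/-- Stitch loss: squared discrepancies on overlaps of consecutive windows. -/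
noncomputable def Lstitch {C w n : ℕ} (s : ℕ)
    (xh : Fin n → Fin w → EuclideanSpace ℝ (Fin C)) : ℝ :=
  ∑ j : Fin n, ∑ i : Fin w,
    if h : 1 ≤ (j : ℕ) ∧ (i : ℕ) < w - s then
      ‖xh j i - xh ⟨(j : ℕ) - 1, by have := j.isLt; omega⟩
          ⟨(i : ℕ) + s, by have := h.2; omega⟩‖ ^ 2
    else 0

/-- Conditional loss: sum of self-guidance and stitch losses. -/
noncomputable def Lcond {C w n : ℕ} (s : ℕ)
    (x : Fin n → Fin w → EuclideanSpace ℝ (Fin C))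
    (m : Fin n → Fin w → Bool)
    (xh : Fin n → Fin w → EuclideanSpace ℝ (Fin C)) : ℝ :=
  Lself x m xh + Lstitch s xh

/-- A window family is real if it is extracted from a single sequence `y`
and matches the observations at observed positions. -/
def isReal {C w n : ℕ} (s : ℕ)
    (x : Fin n → Fin w → EuclideanSpace ℝ (Fin C))
    (m : Fin n → Fin w → Bool)
    (xh : Fin n → Fin w → EuclideanSpace ℝ (Fin C)) : Prop :=
  (∃ y : ℕ → EuclideanSpace ℝ (Fin C),
      ∀ (j : Fin n) (i : Fin w), xh j i = y ((j : ℕ) * s + (i : ℕ))) ∧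
  (∀ (j : Fin n) (i : Fin w), m j i = false → xh j i = x j i)

/-!
A sum of squares vanishes iff every square does, so zero conditional loss means that the observed
values are matched and that consecutive windows agree where they overlap. If positions `i` of
window `j + d` and `i + d * s` of window `j` hold the same time index, then all the intermediate
positions `i + k * s` also lie inside their windows, so agreement of consecutive windows chains to
agreement of any two windows; hence the value depends only on the time index.
-/

section Gluing

variable {α : Type*} {n w s : ℕ} {f : Fin n → Fin w → α}

/-- Consecutive windows of stride `s` agree on their overlap. The indices are tied together by
equations in `ℕ`, so that no truncated subtraction or index bound occurs. -/
def IsStitched (s : ℕ) (f : Fin n → Fin w → α) : Prop :=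
  ∀ ⦃j j' : Fin n⦄ ⦃i i' : Fin w⦄, (j' : ℕ) = j + 1 → (i' : ℕ) = i + s → f j' i = f j i'

theorem IsStitched.eq_of_shift (hf : IsStitched s f) (d : ℕ) {j j' : Fin n} {i i' : Fin w}
    (hj : (j' : ℕ) = j + d) (hi : (i' : ℕ) = i + d * s) : f j' i = f j i' := by
  induction d generalizing j' i with
  | zero =>
    obtain rfl : j' = j := Fin.ext hj
    obtain rfl : i' = i := Fin.ext (by simpa using hi)
    rfl
  | succ d ih =>
    have hi' : (i' : ℕ) = i + s + d * s := by rw [hi]; ring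
    let k : Fin n := ⟨j + d, by omega⟩
    let l : Fin w := ⟨i + s, by omega⟩
    calc
      f j' i = f k l := hf hj rfl
      _ = f j i' := ih rfl hi'

theorem IsStitched.eq_of_position_eq (hf : IsStitched s f) {j j' : Fin n} {i i' : Fin w}
    (h : (j : ℕ) * s + i = j' * s + i') : f j i = f j' i' := by
  wlog hle : j ≤ j' generalizing j j' i i'
  · exact (this h.symm (le_of_not_ge hle)).symm
  obtain ⟨d, hd⟩ := Nat.exists_eq_add_of_le (Fin.le_def.mp hle)
  have hi : (i : ℕ) = i' + d * s := by
    rw [hd, add_mul] at h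
    omega
  exact (hf.eq_of_shift d hd hi).symm

theorem exists_sequence_iff_isStitched [Nonempty α] :
    (∃ y : ℕ → α, ∀ j i, f j i = y ((j : ℕ) * s + i)) ↔ IsStitched s f := by
  constructor
  · rintro ⟨y, hy⟩ j j' i i' hj hi
    rw [hy, hy, hj, hi, add_one_mul, add_assoc, add_comm s]
  · intro hf
    let position : Fin n × Fin w → ℕ := fun p => p.1 * s + p.2
    have hfactors : (Function.uncurry f).FactorsThrough position :=
      fun _ _ h => hf.eq_of_position_eq h
    obtain ⟨y, hy⟩ := (Function.factorsThrough_iff _).mp hfactors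
    exact ⟨y, fun j i => congrFun hy (j, i)⟩

end Gluing

theorem sum_sum_eq_zero_iff_of_nonneg {ι κ M : Type*} [Fintype ι] [Fintype κ]
    [AddCommMonoid M] [PartialOrder M] [IsOrderedAddMonoid M] {f : ι → κ → M}
    (hf : ∀ i j, 0 ≤ f i j) : ∑ i, ∑ j, f i j = 0 ↔ ∀ i j, f i j = 0 := by
  rw [← Fintype.sum_prod_type', Finset.sum_eq_zero_iff_of_nonneg fun p _ => hf p.1 p.2]
  simp only [Finset.mem_univ, true_imp_iff, Prod.forall]

section Losses

variable {C w n : ℕ} (s : ℕ) (x : Fin n → Fin w → EuclideanSpace ℝ (Fin C))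
  (m : Fin n → Fin w → Bool) (xh : Fin n → Fin w → EuclideanSpace ℝ (Fin C))

theorem Lself_nonneg : 0 ≤ Lself x m xh :=
  Finset.sum_nonneg fun _ _ => Finset.sum_nonneg fun _ _ => by positivity

theorem Lstitch_nonneg : 0 ≤ Lstitch s xh :=
  Finset.sum_nonneg fun _ _ => Finset.sum_nonneg fun _ _ => by split_ifs <;> positivity

theorem Lself_eq_zero_iff : Lself x m xh = 0 ↔ ∀ j i, m j i = false → xh j i = x j i := by
  rw [Lself, sum_sum_eq_zero_iff_of_nonneg fun _ _ => by positivity]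
  simp only [ite_eq_right_iff, sq_eq_zero_iff, norm_eq_zero, sub_eq_zero]

theorem Lstitch_eq_zero_iff : Lstitch s xh = 0 ↔ IsStitched s xh := by
  rw [Lstitch, sum_sum_eq_zero_iff_of_nonneg fun _ _ => by split_ifs <;> positivity]
  simp only [dite_eq_right_iff, sq_eq_zero_iff, norm_eq_zero, sub_eq_zero]
  constructor
  · intro h j j' i i' hj hi
    convert h j' i ⟨by omega, by omega⟩ using 2
    · exact Fin.ext (by simp only; omega)
    · exact Fin.ext hi
  · rintro h j i ⟨hj, -⟩
    exact h (Nat.sub_add_cancel hj).symm rfl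

theorem Lcond_nonpos_iff : Lcond s x m xh ≤ 0 ↔ Lself x m xh = 0 ∧ Lstitch s xh = 0 := by
  have hself := Lself_nonneg x m xh
  have hstitch := Lstitch_nonneg s xh
  rw [Lcond, ← add_eq_zero_iff_of_nonneg hself hstitch]
  exact (add_nonneg hself hstitch).ge_iff_eq'

end Losses

theorem real_eq_zero_cond_general {C w n : ℕ} (s : ℕ)
    (x : Fin n → Fin w → EuclideanSpace ℝ (Fin C)) (m : Fin n → Fin w → Bool) :
    {xh : Fin n → Fin w → EuclideanSpace ℝ (Fin C) | isReal s x m xh}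
      = {xh | Lcond s x m xh ≤ 0} := by
  ext xh
  rw [Set.mem_ofPred_eq, Set.mem_ofPred_eq, isReal, exists_sequence_iff_isStitched,
    Lcond_nonpos_iff, Lself_eq_zero_iff, Lstitch_eq_zero_iff, and_comm]

/-- Exact characterization of the zero-conditional-loss set:
`X_real = X_cond^0`. -/
theorem real_eq_zero_cond (C w s n : ℕ) (hC : 1 ≤ C) (hw : 1 ≤ w)
    (hs1 : 1 ≤ s) (hsw : s ≤ w) (hn : 1 ≤ n)
    (x : Fin n → Fin w → EuclideanSpace ℝ (Fin C))
    (m : Fin n → Fin w → Bool) :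
    {xh : Fin n → Fin w → EuclideanSpace ℝ (Fin C) | isReal s x m xh}
      = {xh | Lcond s x m xh ≤ 0} :=
  real_eq_zero_cond_general s x m
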